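/- arXiv:1910.04259 — 3 statements merged into one kernel-verified Lean document; each statement's English description precedes it below -/
import Mathlib

section
/- Let ℰ = {ε_p(i), i ∈ [p], p ∈ ℕ} be a Gaussian triangular array with standard Normal marginals which is UDD with function N_ℰ(τ). Let τ(p) → 0 be chosen so that α(p) := log N_ℰ(τ(p))/log p → 0 as p → ∞. Then for every positive sequence δ_p with (α(p) + τ(p) + 1/log p)/δ_p → 0, one has P(|max_{i∈[p]} ε_p(i)/u_p − 1| > δ_p) → 0 as p → ∞, where u_p = Φ^{←}(1 − 1/p) is the (1 − 1/p)-quantile of the standard Normal distribution. -/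
open MeasureTheory ProbabilityTheory Filter Topology

/-- The standard Normal cumulative distribution function `Φ`. -/
noncomputable def stdGaussianCDF (u : ℝ) : ℝ :=
  ∫ x in Set.Iic u, Real.exp (-x ^ 2 / 2) / Real.sqrt (2 * Real.pi)

/-- The generalized inverse (quantile function) `Φ^{←}` of the standard Normal cdf. -/
noncomputable def stdGaussianQuantile (y : ℝ) : ℝ :=
  sInf {x : ℝ | y ≤ stdGaussianCDF x}

/-- A finite family of random variables is jointly Gaussian if every linear
combination is Gaussian. -/
def IsJointGaussian {Ω : Type*} [MeasureSpace Ω] {ι : Type*} [Fintype ι]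
    (X : ι → Ω → ℝ) : Prop :=
  ∀ c : ι → ℝ, ∃ m : ℝ, ∃ v : NNReal,
    MeasureTheory.Measure.map (fun ω => ∑ i, c i * X i ω) ℙ =
      ProbabilityTheory.gaussianReal m v

/-- The covariance of two real random variables. -/
noncomputable def covar {Ω : Type*} [MeasureSpace Ω] (X Y : Ω → ℝ) : ℝ :=
  (∫ ω, X ω * Y ω ∂ℙ) - (∫ ω, X ω ∂ℙ) * (∫ ω, Y ω ∂ℙ)

section GaussianVector

open Matrix WithLp

/-- The closed lower orthant with corner `a`. -/
def lowerOrthant {ι : Type*} (a : ι → ℝ) : Set (EuclideanSpace ℝ ι) := {x | ∀ i, x i ≤ a i}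

lemma measurableSet_lowerOrthant {ι : Type*} [Fintype ι] (a : ι → ℝ) :
    MeasurableSet (lowerOrthant a) := by
  simp only [lowerOrthant, Set.ofPred_forall]
  exact MeasurableSet.iInter fun i => measurableSet_le (by fun_prop) measurable_const

lemma posSemidef_vecMulVec_self {ι : Type*} [Finite ι] (v : ι → ℝ) :
    (vecMulVec v v).PosSemidef := by
  simpa using posSemidef_vecMulVec_self_star v

variable {ι : Type*} [Fintype ι] [DecidableEq ι]

lemma multivariateGaussian_conv {A B : Matrix ι ι ℝ} (hA : A.PosSemidef) (hB : B.PosSemidef) :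
    multivariateGaussian 0 A ∗ multivariateGaussian 0 B = multivariateGaussian 0 (A + B) := by
  apply Measure.ext_of_charFun
  ext t
  rw [charFun_conv, charFun_multivariateGaussian hA, charFun_multivariateGaussian hB,
    charFun_multivariateGaussian (hA.add hB), ← Complex.exp_add, add_mulVec, dotProduct_add]
  congr 1
  push_cast
  simp
  ring

lemma map_smul_gaussianReal_eq_multivariateGaussian (v : EuclideanSpace ℝ ι) :
    (gaussianReal 0 1).map (fun g : ℝ => g • v) =
      multivariateGaussian 0 (vecMulVec (ofLp v) (ofLp v)) := by
  apply Measure.ext_of_charFun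
  ext t
  rw [charFun_multivariateGaussian (posSemidef_vecMulVec_self (ofLp v)), charFun_apply,
    integral_map (by fun_prop) (by fun_prop)]
  have h := charFun_gaussianReal (μ := 0) (v := 1) (inner ℝ v t)
  rw [charFun_apply] at h
  have h2 : inner ℝ v t = ofLp v ⬝ᵥ ofLp t := by
    simp [PiLp.inner_apply, dotProduct, mul_comm]
  have h3 : ofLp t ⬝ᵥ vecMulVec (ofLp v) (ofLp v) *ᵥ ofLp t = (ofLp v ⬝ᵥ ofLp t) ^ 2 := by
    rw [vecMulVec_mulVec]
    simp [dotProduct_comm, sq]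
  rw [h3]
  simp only [inner_smul_left, h2] at h ⊢
  simp [mul_comm] at h ⊢
  rw [h]

lemma map_smul_stdGaussian {s : ℝ} :
    (multivariateGaussian 0 (1 : Matrix ι ι ℝ)).map (fun x => s • x) =
      multivariateGaussian 0 (s ^ 2 • (1 : Matrix ι ι ℝ)) := by
  apply Measure.ext_of_charFun
  ext t
  rw [charFun_map_smul, charFun_multivariateGaussian PosSemidef.one,
    charFun_multivariateGaussian (PosSemidef.one.smul (sq_nonneg s))]
  simp [smul_mulVec]
  ring_nf

lemma multivariateGaussian_add_vecMulVec_apply {A : Matrix ι ι ℝ} (hA : A.PosSemidef)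
    (v : EuclideanSpace ℝ ι) {s : Set (EuclideanSpace ℝ ι)} (hs : MeasurableSet s) :
    multivariateGaussian 0 (A + vecMulVec (ofLp v) (ofLp v)) s =
      ∫⁻ x, gaussianReal 0 1 {g | x + g • v ∈ s} ∂(multivariateGaussian 0 A) := by
  rw [← multivariateGaussian_conv hA (posSemidef_vecMulVec_self (ofLp v)),
    ← map_smul_gaussianReal_eq_multivariateGaussian, Measure.conv,
    Measure.map_apply (by fun_prop) hs,
    Measure.prod_apply (hs.preimage (by fun_prop))]
  refine lintegral_congr fun x => ?_
  rw [Measure.map_apply (by fun_prop) (hs.preimage (by fun_prop) |>.preimage (by fun_prop))]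
  rfl

/-- Moving a rank one perturbation from the anti-diagonal to the diagonal direction of a pair of
coordinates increases the probability of a lower orthant. -/
lemma orthant_sub_le_orthant_add {A : Matrix ι ι ℝ} (hA : A.PosSemidef) (a : ι → ℝ)
    {i j : ι} (hij : i ≠ j) (s : ℝ) :
    multivariateGaussian 0 (A + vecMulVec (s • (Pi.single i 1 - Pi.single j 1))
        (s • (Pi.single i 1 - Pi.single j 1))) (lowerOrthant a) ≤
      multivariateGaussian 0 (A + vecMulVec (s • (Pi.single i 1 + Pi.single j 1))
        (s • (Pi.single i 1 + Pi.single j 1))) (lowerOrthant a) := by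
  rw [multivariateGaussian_add_vecMulVec_apply hA (toLp 2 (s • (Pi.single i 1 - Pi.single j 1)))
    (measurableSet_lowerOrthant a),
    multivariateGaussian_add_vecMulVec_apply hA (toLp 2 (s • (Pi.single i 1 + Pi.single j 1)))
    (measurableSet_lowerOrthant a)]
  refine lintegral_mono fun x => ?_
  have key : ∀ k, (k = i ∨ k = j) ∨ (k ≠ i ∧ k ≠ j) := by intro k; tauto
  rcases le_total (a i - x i) (a j - x j) with h | h
  · refine measure_mono fun g hg k => ?_
    have hk := hg k
    have hi := hg i
    simp [hij] at hk hi ⊢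
    rcases key k with (rfl | rfl) | ⟨h1, h2⟩
    · simpa [hij] using hi
    · simp [hij.symm]; linarith
    · simpa [h1, h2] using hk
  · have hneg : gaussianReal 0 1 {g | x + g • toLp 2 (s • (Pi.single i 1 - Pi.single j 1))
        ∈ lowerOrthant a} = gaussianReal 0 1 {g | x + (-g) •
        toLp 2 (s • (Pi.single i 1 - Pi.single j 1)) ∈ lowerOrthant a} := by
      have h0 := gaussianReal_map_neg (μ := 0) (v := 1)
      rw [neg_zero] at h0
      conv_lhs => rw [← h0]
      rw [Measure.map_apply (by fun_prop)]
      · rfl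
      · exact (measurableSet_lowerOrthant a).preimage (by fun_prop)
    rw [hneg]
    refine measure_mono fun g hg k => ?_
    have hk := hg k
    have hj := hg j
    simp [hij.symm] at hk hj ⊢
    rcases key k with (rfl | rfl) | ⟨h1, h2⟩
    · simp [hij]; linarith
    · simpa [hij.symm] using hj
    · simpa [h1, h2] using hk

lemma orthant_sum_sub_le_orthant_sum_add (P : Finset (ι × ι)) {d : ι × ι → ℝ}
    (hd : ∀ e, 0 ≤ d e) (hd' : ∀ i, d (i, i) = 0) (a : ι → ℝ)
    {A : Matrix ι ι ℝ} (hA : A.PosSemidef) :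
    multivariateGaussian 0 (A + ∑ e ∈ P, d e • vecMulVec (Pi.single e.1 1 - Pi.single e.2 1)
        (Pi.single e.1 1 - Pi.single e.2 1)) (lowerOrthant a) ≤
      multivariateGaussian 0 (A + ∑ e ∈ P, d e • vecMulVec (Pi.single e.1 1 + Pi.single e.2 1)
        (Pi.single e.1 1 + Pi.single e.2 1)) (lowerOrthant a) := by
  have hpsd (c : ℝ) (hc : 0 ≤ c) (v : ι → ℝ) : (c • vecMulVec v v).PosSemidef :=
    (posSemidef_vecMulVec_self v).smul hc
  have hsq (c : ℝ) (hc : 0 ≤ c) (v : ι → ℝ) :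
      c • vecMulVec v v = vecMulVec (√c • v) (√c • v) := by
    ext i j
    simp only [Matrix.smul_apply, vecMulVec_apply, Pi.smul_apply, smul_eq_mul]
    linear_combination (-v i * v j) * Real.mul_self_sqrt hc
  induction P using Finset.induction_on generalizing A with
  | empty => simp
  | insert e P he ih =>
    rw [Finset.sum_insert he, Finset.sum_insert he, ← add_assoc, ← add_assoc]
    refine (ih (hA.add (hpsd _ (hd e) _))).trans ?_
    rw [add_right_comm, add_right_comm _ (d e • _)]
    by_cases hij : e.1 = e.2
    · have : d e = 0 := by rw [← hd' e.1]; congr 1; ext <;> simp [hij]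
      simp [this]
    · rw [hsq _ (hd e), hsq _ (hd e)]
      refine orthant_sub_le_orthant_add (hA.add ?_) a hij _
      exact posSemidef_sum _ fun e _ => hpsd _ (hd e) _

lemma exists_smul_one_sub_posSemidef {M : Matrix ι ι ℝ} (hM : M.IsHermitian) :
    ∃ C : ℝ, 0 ≤ C ∧ (C • (1 : Matrix ι ι ℝ) - M).PosSemidef := by
  refine ⟨∑ i, ∑ j, |M i j|, by positivity, ?_⟩
  refine PosSemidef.of_dotProduct_mulVec_nonneg (IsHermitian.sub ?_ hM) fun x => ?_
  · simp [IsHermitian]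
  · simp only [star_trivial, sub_mulVec, smul_mulVec, one_mulVec, dotProduct_sub, dotProduct_smul,
      smul_eq_mul, sub_nonneg]
    have hx (i : ι) : x i ^ 2 ≤ x ⬝ᵥ x := by
      simp only [dotProduct, ← sq]
      exact Finset.single_le_sum (f := fun i => x i ^ 2) (fun _ _ => sq_nonneg _)
        (Finset.mem_univ i)
    rw [show x ⬝ᵥ M *ᵥ x = ∑ i, ∑ j, x i * (M i j * x j) by
      simp only [dotProduct, mulVec, Finset.mul_sum]]
    simp only [Finset.sum_mul]
    refine Finset.sum_le_sum fun i _ => Finset.sum_le_sum fun j _ => ?_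
    have h1 : x i * x j ≤ x ⬝ᵥ x := by nlinarith [hx i, hx j, sq_nonneg (x i - x j)]
    have h2 : -(x i * x j) ≤ x ⬝ᵥ x := by nlinarith [hx i, hx j, sq_nonneg (x i + x j)]
    calc x i * (M i j * x j) = M i j * (x i * x j) := by ring
      _ ≤ |M i j| * |x i * x j| := by rw [← abs_mul]; exact le_abs_self _
      _ ≤ |M i j| * (x ⬝ᵥ x) := by gcongr; exact abs_le'.2 ⟨h1, h2⟩

lemma sum_pair_add_sub_pair_sub {D : Matrix ι ι ℝ} (hD : D.IsHermitian) :
    ∑ e : ι × ι, (D e.1 e.2 / 4) • vecMulVec (Pi.single e.1 1 + Pi.single e.2 1)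
        (Pi.single e.1 1 + Pi.single e.2 1) =
      D + ∑ e : ι × ι, (D e.1 e.2 / 4) • vecMulVec (Pi.single e.1 1 - Pi.single e.2 1)
        (Pi.single e.1 1 - Pi.single e.2 1) := by
  rw [← sub_eq_iff_eq_add, ← Finset.sum_sub_distrib]
  have h (e : ι × ι) : (D e.1 e.2 / 4) • vecMulVec (Pi.single e.1 1 + Pi.single e.2 1)
        (Pi.single e.1 1 + Pi.single e.2 1) -
      (D e.1 e.2 / 4) • vecMulVec (Pi.single e.1 1 - Pi.single e.2 1)
        (Pi.single e.1 1 - Pi.single e.2 1) =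
      (2 : ℝ)⁻¹ • (single e.1 e.2 (D e.1 e.2) + (single e.1 e.2 (D e.1 e.2))ᵀ) := by
    ext k l
    simp only [Matrix.sub_apply, Matrix.smul_apply, vecMulVec_apply, Pi.add_apply, Pi.sub_apply,
      Pi.single_apply,
      Matrix.single_apply, Matrix.add_apply, transpose_apply, smul_eq_mul]
    by_cases h1 : k = e.1 <;> by_cases h2 : k = e.2 <;> by_cases h3 : l = e.1 <;>
      by_cases h4 : l = e.2 <;> simp [*, eq_comm] <;> grind
  simp_rw [h]
  rw [← Finset.smul_sum, Finset.sum_add_distrib, ← transpose_sum, Fintype.sum_prod_type,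
    ← matrix_eq_sum_single D]
  have : Dᵀ = D := by simpa using hD.eq
  rw [this, ← two_smul ℝ D, smul_smul]
  norm_num

/-- **Slepian's inequality** for a pair of Gaussian vectors perturbed by white noise. -/
theorem slepian_add_smul_one {S T : Matrix ι ι ℝ} (hS : S.PosSemidef) (hT : T.PosSemidef)
    (hdiag : ∀ i, S i i = T i i) (hle : ∀ i j, S i j ≤ T i j) (a : ι → ℝ) {s : ℝ} (hs : 0 < s) :
    multivariateGaussian 0 (S + s • (1 : Matrix ι ι ℝ)) (lowerOrthant a) ≤
      multivariateGaussian 0 (T + s • (1 : Matrix ι ι ℝ)) (lowerOrthant a) := by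
  have hD : (T - S).IsHermitian := hT.isHermitian.sub hS.isHermitian
  set L := ∑ e : ι × ι, ((T - S) e.1 e.2 / 4) • vecMulVec (Pi.single e.1 1 - Pi.single e.2 1 : ι → ℝ)
        (Pi.single e.1 1 - Pi.single e.2 1 : ι → ℝ) with hL
  have hLh : L.IsHermitian := by
    refine (posSemidef_sum _ fun e _ => ?_).isHermitian
    refine (posSemidef_vecMulVec_self _).smul ?_
    simp only [Matrix.sub_apply]
    linarith [hle e.1 e.2]
  obtain ⟨C, hC, hCL⟩ := exists_smul_one_sub_posSemidef hLh
  obtain ⟨n, hn⟩ := exists_nat_gt (C / s)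
  have hn0 : (0 : ℝ) < n := lt_of_le_of_lt (by positivity) hn
  have hCn : C / n ≤ s := by
    rw [div_lt_iff₀ hs] at hn
    rw [div_le_iff₀ hn0]
    linarith
  have step (k : ℕ) (hk : k < n) :
      multivariateGaussian 0 (S + (k / n : ℝ) • (T - S) + s • (1 : Matrix ι ι ℝ))
        (lowerOrthant a) ≤
      multivariateGaussian 0 (S + ((k + 1 : ℕ) / n : ℝ) • (T - S) + s • (1 : Matrix ι ι ℝ))
        (lowerOrthant a) := by
    have hkn : (k : ℝ) / n ≤ 1 := by
      rw [div_le_one hn0]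
      exact_mod_cast hk.le
    have hB : (S + (k / n : ℝ) • (T - S) + s • (1 : Matrix ι ι ℝ) - (1 / n : ℝ) • L).PosSemidef := by
      have : S + (k / n : ℝ) • (T - S) + s • (1 : Matrix ι ι ℝ) - (1 / n : ℝ) • L =
          (1 - k / n : ℝ) • S + (k / n : ℝ) • T + (s - C / n) • (1 : Matrix ι ι ℝ) +
            (1 / n : ℝ) • (C • (1 : Matrix ι ι ℝ) - L) := by
        module
      rw [this]
      refine (((hS.smul (by linarith)).add (hT.smul (by positivity))).add
        (PosSemidef.one.smul (by linarith))).add (hCL.smul (by positivity))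
    have := orthant_sum_sub_le_orthant_sum_add Finset.univ
      (d := fun e => (1 / n : ℝ) * ((T - S) e.1 e.2 / 4))
      (fun e => mul_nonneg (by positivity) (by simp only [Matrix.sub_apply]; linarith [hle e.1 e.2]))
      (fun i => by simp [hdiag]) a hB
    simp_rw [mul_smul] at this
    rw [← Finset.smul_sum, ← Finset.smul_sum, sum_pair_add_sub_pair_sub hD, ← hL] at this
    convert this using 2
    · congr 1; module
    · congr 1; push_cast; module
  have main (k : ℕ) (hk : k ≤ n) :
      multivariateGaussian 0 (S + s • (1 : Matrix ι ι ℝ)) (lowerOrthant a) ≤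
      multivariateGaussian 0 (S + (k / n : ℝ) • (T - S) + s • (1 : Matrix ι ι ℝ))
        (lowerOrthant a) := by
    induction k with
    | zero => simp
    | succ k ih => exact (ih (by omega)).trans (step k (by omega))
  have := main n le_rfl
  rwa [div_self hn0.ne', one_smul, add_sub_cancel] at this

lemma multivariateGaussian_sq_smul_one_lowerOrthant {s : ℝ} (hs : 0 < s) (b : ℝ) :
    multivariateGaussian 0 (s ^ 2 • (1 : Matrix ι ι ℝ)) (lowerOrthant fun _ => b) =
      gaussianReal 0 1 (Set.Iic (b / s)) ^ Fintype.card ι := by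
  rw [← map_smul_stdGaussian, multivariateGaussian_zero_one, ← map_pi_eq_stdGaussian,
    Measure.map_map (by fun_prop) (by fun_prop),
    Measure.map_apply (by fun_prop) (measurableSet_lowerOrthant _)]
  have : ((fun x : EuclideanSpace ℝ ι => s • x) ∘ toLp 2) ⁻¹' lowerOrthant (fun _ => b) =
      Set.pi Set.univ fun _ => Set.Iic (b / s) := by
    ext x
    simp [lowerOrthant, Pi.le_def, le_div_iff₀ hs, mul_comm]
  rw [this, Measure.pi_pi]
  simp

lemma exists_lowerOrthant_le_two_mul_add_smul_one {S : Matrix ι ι ℝ} (hS : S.PosSemidef) (a : ℝ)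
    {η : ℝ} (hη : 0 < η) :
    ∃ s : ℝ, 0 < s ∧ multivariateGaussian 0 S (lowerOrthant fun _ => a) ≤
      2 * multivariateGaussian 0 (S + s ^ 2 • (1 : Matrix ι ι ℝ)) (lowerOrthant fun _ => a + η) := by
  have hlim : Tendsto (fun x : ℝ => gaussianReal 0 1 (Set.Iic x) ^ Fintype.card ι) atTop (𝓝 1) := by
    have := ENNReal.Tendsto.pow (n := Fintype.card ι)
      (tendsto_measure_Iic_atTop (gaussianReal 0 1))
    simpa using this
  obtain ⟨x, hx, hx0⟩ := ((hlim.eventually_const_le (show (2⁻¹ : ENNReal) < 1 by norm_num)).and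
    (eventually_gt_atTop 0)).exists
  refine ⟨η / x, by positivity, ?_⟩
  rw [← multivariateGaussian_conv hS (PosSemidef.one.smul (by positivity)), Measure.conv,
    Measure.map_apply (by fun_prop) (measurableSet_lowerOrthant _)]
  have hsub : lowerOrthant (fun _ : ι => a) ×ˢ lowerOrthant (fun _ : ι => η) ⊆
      (fun x : EuclideanSpace ℝ ι × EuclideanSpace ℝ ι => x.1 + x.2) ⁻¹'
        lowerOrthant (fun _ => a + η) :=
    fun y hy i => add_le_add (hy.1 i) (hy.2 i)
  calc _ = 2 * (multivariateGaussian 0 S (lowerOrthant fun _ => a) * 2⁻¹) := by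
        rw [mul_comm, mul_assoc, ENNReal.inv_mul_cancel (by norm_num) (by norm_num), mul_one]
    _ ≤ 2 * (multivariateGaussian 0 S (lowerOrthant fun _ => a) *
        multivariateGaussian 0 ((η / x) ^ 2 • (1 : Matrix ι ι ℝ)) (lowerOrthant fun _ => η)) := by
        gcongr
        rw [multivariateGaussian_sq_smul_one_lowerOrthant (by positivity)]
        rwa [div_div_cancel₀ hη.ne']
    _ ≤ _ := by
        rw [← Measure.prod_prod]
        gcongr

/-- Orthant probabilities of a standardized Gaussian vector with pairwise covariances at most `τ`
are bounded by means of the equicorrelated vector `√τ Z + √(1 - τ) Zᵢ`. -/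
theorem lowerOrthant_le_of_covariance_le {S : Matrix ι ι ℝ} (hS : S.PosSemidef)
    (hdiag : ∀ i, S i i = 1) {τ : ℝ} (hτ : 0 ≤ τ) (hτ1 : τ < 1)
    (hle : ∀ i j, i ≠ j → S i j ≤ τ) {a η t b : ℝ} (hη : 0 < η) (hb : 0 ≤ b)
    (hab : a + η + t ≤ b * √(1 - τ)) :
    multivariateGaussian 0 S (lowerOrthant fun _ => a) ≤
      2 * (gaussianReal 0 1 {z | √τ * z ≤ -t} +
        gaussianReal 0 1 (Set.Iic b) ^ Fintype.card ι) := by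
  obtain ⟨s, hs, h⟩ := exists_lowerOrthant_le_two_mul_add_smul_one hS a hη
  refine h.trans ?_
  gcongr
  set v : EuclideanSpace ℝ ι := toLp 2 fun _ => √τ
  set r := √(1 - τ + s ^ 2) with hr
  have hr2 : r ^ 2 = 1 - τ + s ^ 2 := Real.sq_sqrt (by nlinarith)
  have hr0 : 0 < r := Real.sqrt_pos.2 (by nlinarith)
  have hT : (vecMulVec (ofLp v) (ofLp v) + (1 - τ) • (1 : Matrix ι ι ℝ)).PosSemidef :=
    (posSemidef_vecMulVec_self _).add (PosSemidef.one.smul (by linarith))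
  refine (slepian_add_smul_one hS hT (fun i => ?_) (fun i j => ?_) _ (by positivity)).trans ?_
  · simp [hdiag, vecMulVec_apply, v, Real.mul_self_sqrt hτ]
  · rcases eq_or_ne i j with rfl | hij
    · simp [hdiag, vecMulVec_apply, v, Real.mul_self_sqrt hτ]
    · simpa [vecMulVec_apply, v, Real.mul_self_sqrt hτ, hij] using hle i j hij
  rw [add_assoc, ← add_smul, ← hr2, add_comm, multivariateGaussian_add_vecMulVec_apply
    (PosSemidef.one.smul (by positivity)) v (measurableSet_lowerOrthant _)]
  calc _ ≤ ∫⁻ x, (gaussianReal 0 1 {z | √τ * z ≤ -t} +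
        (lowerOrthant fun _ : ι => a + η + t).indicator 1 x)
          ∂multivariateGaussian 0 (r ^ 2 • (1 : Matrix ι ι ℝ)) := by
        refine lintegral_mono fun x => ?_
        by_cases hx : x ∈ lowerOrthant fun _ : ι => a + η + t
        · simp only [hx, Set.indicator_of_mem, Pi.one_apply]
          exact prob_le_one.trans le_add_self
        · simp only [hx, not_false_eq_true, Set.indicator_of_notMem, add_zero]
          refine measure_mono fun g hg => ?_
          simp only [lowerOrthant, Set.mem_ofPred_eq, not_forall, not_le] at hx
          obtain ⟨i, hi⟩ := hx
          have := hg i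
          simp only [PiLp.add_apply, PiLp.smul_apply, smul_eq_mul, v] at this
          simp only [Set.mem_ofPred_eq]
          linarith
    _ = gaussianReal 0 1 {z | √τ * z ≤ -t} +
        gaussianReal 0 1 (Set.Iic ((a + η + t) / r)) ^ Fintype.card ι := by
        rw [lintegral_add_left measurable_const, lintegral_const, measure_univ, mul_one,
          lintegral_indicator_one (measurableSet_lowerOrthant _),
          multivariateGaussian_sq_smul_one_lowerOrthant hr0]
    _ ≤ _ := by
        gcongr
        rw [div_le_iff₀ hr0]
        exact hab.trans (mul_le_mul_of_nonneg_left (Real.sqrt_le_sqrt (by nlinarith)) hb)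

end GaussianVector

section JointGaussian

open Matrix WithLp

lemma IsJointGaussian.comp {Ω : Type*} [MeasureSpace Ω] {ι κ : Type*} [Fintype ι] [Fintype κ]
    {X : κ → Ω → ℝ} (hX : IsJointGaussian X) (f : ι → κ) :
    IsJointGaussian fun i => X (f i) := by
  classical
  intro c
  obtain ⟨m, v, h⟩ := hX fun k => ∑ i with f i = k, c i
  refine ⟨m, v, ?_⟩
  rw [← h]
  congr 1
  ext ω
  rw [← Finset.sum_fiberwise Finset.univ f]
  refine Finset.sum_congr rfl fun k _ => ?_
  rw [Finset.sum_mul]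
  refine Finset.sum_congr rfl fun i hi => ?_
  simp only [(Finset.mem_filter.1 hi).2]

variable {Ω : Type*} [MeasureSpace Ω]

lemma covar_comm (Y Z : Ω → ℝ) : covar Y Z = covar Z Y := by
  simp only [covar, mul_comm]

lemma memLp_two_of_map_eq_gaussianReal {Y : Ω → ℝ} (hY : Measurable Y) {m : ℝ} {v : NNReal}
    (h : Measure.map Y ℙ = gaussianReal m v) : MemLp Y 2 (ℙ : Measure Ω) := by
  have h2 := memLp_id_gaussianReal (μ := m) (v := v) 2
  rw [← h, memLp_map_measure_iff (by fun_prop) hY.aemeasurable] at h2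
  exact h2

lemma integral_eq_of_map_eq_gaussianReal {Y : Ω → ℝ} (hY : Measurable Y) {m : ℝ} {v : NNReal}
    (h : Measure.map Y ℙ = gaussianReal m v) : ∫ ω, Y ω = m := by
  rw [← integral_id_gaussianReal (μ := m) (v := v), ← h, integral_map hY.aemeasurable (by fun_prop)]

lemma variance_eq_of_map_eq_gaussianReal {Y : Ω → ℝ} (hY : Measurable Y) {m : ℝ} {v : NNReal}
    (h : Measure.map Y ℙ = gaussianReal m v) : Var[Y; ℙ] = v := by
  rw [← variance_id_gaussianReal (μ := m) (v := v), ← h, variance_map (by fun_prop) hY.aemeasurable]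
  rfl

variable [IsProbabilityMeasure (ℙ : Measure Ω)] {ι : Type*} [Fintype ι] {X : ι → Ω → ℝ}

lemma covar_eq_covariance {Y Z : Ω → ℝ} (hY : MemLp Y 2 (ℙ : Measure Ω))
    (hZ : MemLp Z 2 (ℙ : Measure Ω)) : covar Y Z = cov[Y, Z; ℙ] := by
  rw [covariance_eq_sub hY hZ]
  rfl

lemma covar_self_eq_one {Y : Ω → ℝ} (hY : Measurable Y)
    (h : Measure.map Y ℙ = gaussianReal 0 1) : covar Y Y = 1 := by
  have := memLp_two_of_map_eq_gaussianReal hY h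
  rw [covar_eq_covariance this this, covariance_self hY.aemeasurable,
    variance_eq_of_map_eq_gaussianReal hY h]
  rfl

lemma variance_sum_mul_eq_dotProduct (hX : ∀ i, MemLp (X i) 2 (ℙ : Measure Ω)) (c : ι → ℝ) :
    Var[fun ω => ∑ i, c i * X i ω; ℙ] =
      c ⬝ᵥ (Matrix.of fun i j => covar (X i) (X j)) *ᵥ c := by
  rw [variance_fun_sum fun i => (hX i).const_mul (c i)]
  simp only [dotProduct, mulVec, Finset.mul_sum]
  refine Finset.sum_congr rfl fun i _ => Finset.sum_congr rfl fun j _ => ?_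
  rw [covariance_const_mul_left, covariance_const_mul_right, Matrix.of_apply,
    covar_eq_covariance (hX i) (hX j)]
  ring

lemma posSemidef_covar (hX : ∀ i, MemLp (X i) 2 (ℙ : Measure Ω)) :
    (Matrix.of fun i j => covar (X i) (X j)).PosSemidef := by
  refine PosSemidef.of_dotProduct_mulVec_nonneg ?_ fun c => ?_
  · ext i j
    simp [covar_comm (X j)]
  · rw [star_trivial, ← variance_sum_mul_eq_dotProduct hX]
    exact variance_nonneg _ _

/-- The law of a centered jointly Gaussian family is the multivariate Gaussian measure given by its
covariance matrix. -/
lemma IsJointGaussian.map_eq_multivariateGaussian [DecidableEq ι] (hG : IsJointGaussian X)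
    (hmeas : ∀ i, Measurable (X i)) (hmarg : ∀ i, Measure.map (X i) ℙ = gaussianReal 0 1) :
    Measure.map (fun ω => toLp 2 fun i => X i ω) ℙ =
      multivariateGaussian 0 (Matrix.of fun i j => covar (X i) (X j)) := by
  have hX i := memLp_two_of_map_eq_gaussianReal (hmeas i) (hmarg i)
  have hm : Measurable fun ω => toLp 2 fun i => X i ω := by fun_prop
  have := Measure.isProbabilityMeasure_map (μ := (ℙ : Measure Ω)) hm.aemeasurable
  apply Measure.ext_of_charFun
  ext t
  rw [charFun_multivariateGaussian (posSemidef_covar hX), charFun_apply,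
    integral_map (by fun_prop) (by fun_prop), ← variance_sum_mul_eq_dotProduct hX]
  obtain ⟨m, v, hmv⟩ := hG t
  have hsm : Measurable fun ω => ∑ i, t i * X i ω := by fun_prop
  have hm0 : m = 0 := by
    rw [← integral_eq_of_map_eq_gaussianReal hsm hmv, integral_finsetSum _
      fun i _ => ((hX i).const_mul (t i)).integrable (by norm_num)]
    simp [integral_const_mul, integral_eq_of_map_eq_gaussianReal (hmeas _) (hmarg _)]
  rw [variance_eq_of_map_eq_gaussianReal hsm hmv]
  have hc := charFun_gaussianReal (μ := m) (v := v) 1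
  rw [← hmv, charFun_apply_real, integral_map (by fun_prop) (by fun_prop)] at hc
  simp [hm0] at hc
  simp [PiLp.inner_apply, hc]

end JointGaussian

section GaussianTail

lemma gaussianReal_real_eq_integral (m : ℝ) (s : Set ℝ) :
    (gaussianReal m 1).real s = ∫ x in s, gaussianPDFReal m 1 x := by
  rw [measureReal_def, gaussianReal_apply_eq_integral _ one_ne_zero,
    ENNReal.toReal_ofReal (integral_nonneg fun x => gaussianPDFReal_nonneg _ _ x)]

lemma stdGaussianCDF_eq (u : ℝ) : stdGaussianCDF u = (gaussianReal 0 1).real (Set.Iic u) := by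
  rw [gaussianReal_real_eq_integral, stdGaussianCDF]
  congr 1 with x
  simp [gaussianPDFReal]
  ring

lemma gaussianReal_Ioi_add (u h : ℝ) : (gaussianReal 0 1).real (Set.Ioi (u + h)) =
    ∫ y in Set.Ioi u, Real.exp (-(y * h) - h ^ 2 / 2) * gaussianPDFReal 0 1 y := by
  have h1 : (gaussianReal 0 1).real (Set.Ioi (u + h)) = (gaussianReal (-h) 1).real (Set.Ioi u) := by
    have := gaussianReal_map_add_const (μ := 0) (v := 1) (-h)
    rw [zero_add] at this
    rw [← this, map_measureReal_apply (by fun_prop) measurableSet_Ioi]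
    congr 1
    ext x
    simp
  rw [h1, gaussianReal_real_eq_integral]
  congr 1 with y
  simp only [gaussianPDFReal]
  rw [mul_left_comm, ← Real.exp_add]
  congr 2
  simp
  ring

lemma integrableOn_shifted_gaussianPDFReal (h : ℝ) (s : Set ℝ) :
    IntegrableOn (fun y => Real.exp (-(y * h) - h ^ 2 / 2) * gaussianPDFReal 0 1 y) s := by
  refine ((integrable_gaussianPDFReal (-h) 1).integrableOn (s := s)).congr_fun_ae
    (ae_of_all _ fun y => ?_)
  simp only [gaussianPDFReal]
  rw [mul_left_comm, ← Real.exp_add]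
  congr 2
  simp
  ring

lemma gaussianReal_Ioi_add_le {u h : ℝ} (hh : 0 ≤ h) :
    (gaussianReal 0 1).real (Set.Ioi (u + h)) ≤
      Real.exp (-(u * h)) * (gaussianReal 0 1).real (Set.Ioi u) := by
  rw [gaussianReal_Ioi_add, gaussianReal_real_eq_integral, ← integral_const_mul]
  refine setIntegral_mono_on (integrableOn_shifted_gaussianPDFReal _ _)
    ((integrable_gaussianPDFReal 0 1).integrableOn.const_mul _) measurableSet_Ioi fun y hy => ?_
  have := gaussianPDFReal_nonneg 0 1 y
  gcongr
  nlinarith [Set.mem_Ioi.1 hy]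

lemma le_gaussianReal_Ioi_sub {u h : ℝ} (hh : 0 ≤ h) :
    Real.exp (u * h - h ^ 2 / 2) * (gaussianReal 0 1).real (Set.Ioi u) ≤
      (gaussianReal 0 1).real (Set.Ioi (u - h)) := by
  rw [sub_eq_add_neg u, gaussianReal_Ioi_add, gaussianReal_real_eq_integral, ← integral_const_mul]
  refine setIntegral_mono_on ((integrable_gaussianPDFReal 0 1).integrableOn.const_mul _)
    (integrableOn_shifted_gaussianPDFReal _ _) measurableSet_Ioi fun y hy => ?_
  have := gaussianPDFReal_nonneg 0 1 y
  refine mul_le_mul_of_nonneg_right (Real.exp_le_exp.2 ?_) this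
  nlinarith [Set.mem_Ioi.1 hy]

lemma gaussianReal_real_pos {a b : ℝ} (hab : a < b) :
    0 < (gaussianReal 0 1).real (Set.Ioo a b) := by
  refine ENNReal.toReal_pos (fun h => ?_) (measure_ne_top _ _)
  have := gaussianReal_absolutelyContinuous' 0 (one_ne_zero (α := NNReal)) h
  simp at this
  linarith

lemma le_gaussianReal_Ioi {u : ℝ} (hu : 0 ≤ u) :
    Real.exp (-u - u ^ 2 / 2) * (gaussianReal 0 1).real (Set.Ioo 0 1) ≤
      (gaussianReal 0 1).real (Set.Ioi u) := by
  rw [← zero_add u, gaussianReal_Ioi_add, gaussianReal_real_eq_integral, ← integral_const_mul,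
    zero_add]
  refine (setIntegral_mono_on ((integrable_gaussianPDFReal 0 1).integrableOn.const_mul _)
    (integrableOn_shifted_gaussianPDFReal u _) measurableSet_Ioo fun y hy => ?_).trans
    (setIntegral_mono_set (integrableOn_shifted_gaussianPDFReal _ _)
      (ae_of_all _ fun y => mul_nonneg (Real.exp_nonneg _) (gaussianPDFReal_nonneg 0 1 y))
      Set.Ioo_subset_Ioi_self.eventuallyLE)
  have := gaussianPDFReal_nonneg 0 1 y
  gcongr
  nlinarith [hy.1, hy.2]

lemma gaussianReal_real_Ioi (u : ℝ) :
    (gaussianReal 0 1).real (Set.Ioi u) = 1 - stdGaussianCDF u := by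
  rw [stdGaussianCDF_eq, ← probReal_compl_eq_one_sub measurableSet_Iic, Set.compl_Iic]

lemma stdGaussianCDF_lt_one (u : ℝ) : stdGaussianCDF u < 1 := by
  have h := gaussianReal_real_pos (show u < u + 1 by linarith)
  have h2 := measureReal_mono (μ := gaussianReal 0 1)
    (show Set.Ioo u (u + 1) ⊆ Set.Ioi u from Set.Ioo_subset_Ioi_self)
  linarith [gaussianReal_real_Ioi u]

lemma monotone_stdGaussianCDF : Monotone stdGaussianCDF := fun x y hxy => by
  rw [stdGaussianCDF_eq, stdGaussianCDF_eq]
  exact measureReal_mono (Set.Iic_subset_Iic.2 hxy)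

lemma continuous_stdGaussianCDF : Continuous stdGaussianCDF := by
  have hpdf := integrable_gaussianPDFReal 0 1
  have h (u : ℝ) : stdGaussianCDF u =
      (∫ x in (0 : ℝ)..u, gaussianPDFReal 0 1 x) + stdGaussianCDF 0 := by
    rw [stdGaussianCDF_eq, stdGaussianCDF_eq, gaussianReal_real_eq_integral,
      gaussianReal_real_eq_integral, ← sub_eq_iff_eq_add,
      intervalIntegral.integral_Iic_sub_Iic hpdf.integrableOn hpdf.integrableOn]
  rw [funext h]
  exact (hpdf.continuous_primitive 0).add continuous_const

lemma stdGaussianCDF_quantile {y : ℝ} (hy0 : 0 < y) (hy1 : y < 1) :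
    stdGaussianCDF (stdGaussianQuantile y) = y := by
  have hcdf : (fun x => cdf (gaussianReal 0 1) x) = stdGaussianCDF :=
    funext fun x => by rw [cdf_eq_real, stdGaussianCDF_eq]
  have htop : Tendsto stdGaussianCDF atTop (𝓝 1) := hcdf ▸ tendsto_cdf_atTop (gaussianReal 0 1)
  have hbot : Tendsto stdGaussianCDF atBot (𝓝 0) := hcdf ▸ tendsto_cdf_atBot (gaussianReal 0 1)
  have hne : {x : ℝ | y ≤ stdGaussianCDF x}.Nonempty := (htop.eventually_const_le hy1).exists
  obtain ⟨z, hz⟩ := (hbot.eventually_lt_const hy0).exists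
  have hbdd : BddBelow {x : ℝ | y ≤ stdGaussianCDF x} := by
    refine ⟨z, fun x hx => ?_⟩
    by_contra! hlt
    exact absurd (hx.trans (monotone_stdGaussianCDF hlt.le)) (not_le.2 hz)
  have hmem : y ≤ stdGaussianCDF (stdGaussianQuantile y) :=
    (isClosed_le continuous_const continuous_stdGaussianCDF).csInf_mem hne hbdd
  refine le_antisymm ?_ hmem
  by_contra! hlt
  have hev := (continuous_stdGaussianCDF.continuousAt.eventually (lt_mem_nhds hlt)).filter_mono
    (nhdsWithin_le_nhds (s := Set.Iio (stdGaussianQuantile y)))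
  obtain ⟨x, hx, hx'⟩ := (hev.and self_mem_nhdsWithin).exists
  exact absurd (csInf_le hbdd hx.le) (not_le.2 hx')

lemma gaussianReal_Ioi_quantile {p : ℕ} (hp : 2 ≤ p) :
    (gaussianReal 0 1).real (Set.Ioi (stdGaussianQuantile (1 - 1 / p))) = 1 / p := by
  have hp' : (2 : ℝ) ≤ p := by exact_mod_cast hp
  have : (1 : ℝ) / p < 1 := by rw [div_lt_one (by linarith)]; linarith
  rw [gaussianReal_real_Ioi, stdGaussianCDF_quantile (by linarith)
    (by linarith [show (0 : ℝ) < 1 / p by positivity])]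
  ring

lemma eventually_quantile_pos :
    ∀ᶠ p : ℕ in atTop, 0 < stdGaussianQuantile (1 - 1 / p) := by
  have h : Tendsto (fun p : ℕ => 1 - 1 / (p : ℝ)) atTop (𝓝 1) := by
    simpa using tendsto_one_div_atTop_nhds_zero_nat.const_sub (1 : ℝ)
  filter_upwards [h.eventually_const_lt (stdGaussianCDF_lt_one 0), eventually_ge_atTop 2]
    with p hp hp2
  by_contra! hle
  have := gaussianReal_Ioi_quantile hp2
  rw [gaussianReal_real_Ioi] at this
  linarith [monotone_stdGaussianCDF hle]

lemma eventually_log_le_quantile_sq :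
    ∀ᶠ p : ℕ in atTop, Real.log p / 2 ≤ stdGaussianQuantile (1 - 1 / p) ^ 2 := by
  set c := (gaussianReal 0 1).real (Set.Ioo 0 1)
  have hc : 0 < c := gaussianReal_real_pos one_pos
  filter_upwards [eventually_quantile_pos, eventually_ge_atTop 2,
    (Real.tendsto_log_atTop.comp tendsto_natCast_atTop_atTop).eventually_ge_atTop
      (2 * (1 / 2 - Real.log c))] with p hu hp hlog
  simp only [Function.comp_apply] at hlog
  have hp' : (0 : ℝ) < p := by positivity
  have h := le_gaussianReal_Ioi hu.le
  rw [gaussianReal_Ioi_quantile hp] at h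
  have h2 := Real.log_le_log (by positivity) h
  rw [Real.log_mul (Real.exp_ne_zero _) hc.ne', Real.log_exp, Real.log_div one_ne_zero hp'.ne',
    Real.log_one] at h2
  nlinarith [sq_nonneg (stdGaussianQuantile (1 - 1 / p) - 1)]

lemma gaussianReal_sqrt_mul_le_neg {τ t : ℝ} (hτ : 0 < τ) (ht : 0 < t) :
    gaussianReal 0 1 {z | √τ * z ≤ -t} ≤ ENNReal.ofReal (τ / t ^ 2) := by
  have hs : 0 < √τ := Real.sqrt_pos.2 hτ
  have h := meas_ge_le_variance_div_sq (memLp_id_gaussianReal (μ := 0) (v := 1) 2)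
    (show 0 < t / √τ by positivity)
  refine (measure_mono fun z hz => ?_).trans (h.trans_eq ?_)
  · simp only [Set.mem_ofPred_eq, id, integral_id_gaussianReal, sub_zero] at hz ⊢
    rw [le_abs, div_le_iff₀ hs, div_le_iff₀ hs]
    right; linarith
  · rw [variance_id_gaussianReal, div_pow, Real.sq_sqrt hτ.le]
    simp

lemma gaussianReal_Iic_pow_le (b : ℝ) (q : ℕ) :
    gaussianReal 0 1 (Set.Iic b) ^ q ≤
      ENNReal.ofReal (Real.exp (-(q * (gaussianReal 0 1).real (Set.Ioi b)))) := by
  have h0 : (gaussianReal 0 1).real (Set.Iic b) = 1 - (gaussianReal 0 1).real (Set.Ioi b) := by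
    rw [gaussianReal_real_Ioi, stdGaussianCDF_eq]; ring
  rw [← ofReal_measureReal (μ := gaussianReal 0 1) (s := Set.Iic b),
    ← ENNReal.ofReal_pow measureReal_nonneg]
  refine ENNReal.ofReal_le_ofReal ?_
  rw [← mul_neg, Real.exp_nat_mul, h0]
  have : 0 ≤ (gaussianReal 0 1).real (Set.Iic b) := measureReal_nonneg
  gcongr
  · linarith
  · linarith [Real.add_one_le_exp (-(gaussianReal 0 1).real (Set.Ioi b))]

end GaussianTail

lemma exists_finset_pairwise_of_card_le {κ : Type*} [Fintype κ] (r : κ → κ → Prop)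
    (hrefl : ∀ i, r i i) (hsymm : ∀ i j, r i j → r j i) (N : ℕ)
    (hN : ∀ i, Nat.card {k | r k i} ≤ N) :
    ∃ I : Finset κ, (∀ i ∈ I, ∀ j ∈ I, i ≠ j → ¬ r i j) ∧ Fintype.card κ ≤ I.card * N := by
  classical
  obtain ⟨I, -, hI⟩ := (Set.toFinite {I : Finset κ | ∀ i ∈ I, ∀ j ∈ I, i ≠ j → ¬ r i j})
    |>.exists_le_maximal (a := ∅) (by simp)
  refine ⟨I, hI.prop, ?_⟩
  have hcover : (Finset.univ : Finset κ) ⊆ I.biUnion fun i => Finset.univ.filter fun k => r k i := by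
    intro k _
    by_contra hk
    simp only [Finset.mem_biUnion, Finset.mem_filter, Finset.mem_univ, true_and, not_exists,
      not_and] at hk
    have hins : insert k I ∈ {I : Finset κ | ∀ i ∈ I, ∀ j ∈ I, i ≠ j → ¬ r i j} := by
      intro i hi j hj hij hr
      rcases Finset.mem_insert.1 hi with rfl | hi' <;> rcases Finset.mem_insert.1 hj with rfl | hj'
      · exact hij rfl
      · exact hk j hj' hr
      · exact hk i hi' (hsymm _ _ hr)
      · exact hI.prop i hi' j hj' hij hr
    exact hk k (hI.le_of_ge hins (Finset.subset_insert k I) (Finset.mem_insert_self k I)) (hrefl k)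
  refine (Finset.card_le_card hcover).trans (Finset.card_biUnion_le_card_mul _ _ _ fun i _ => ?_)
  refine le_of_eq_of_le ?_ (hN i)
  rw [Nat.card_eq_fintype_card]
  exact (Fintype.card_subtype _).symm

section Maximum

variable {Ω : Type*} [MeasureSpace Ω] {κ : Type*} [Fintype κ] {X : κ → Ω → ℝ}

lemma prob_exists_gt_le (hmeas : ∀ i, Measurable (X i))
    (hmarg : ∀ i, Measure.map (X i) ℙ = gaussianReal 0 1) (x : ℝ) :
    ℙ {ω | ∃ i, x < X i ω} ≤
      ENNReal.ofReal (Fintype.card κ * (gaussianReal 0 1).real (Set.Ioi x)) := by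
  have h (i : κ) : ℙ {ω | x < X i ω} = gaussianReal 0 1 (Set.Ioi x) := by
    rw [← hmarg i, Measure.map_apply (hmeas i) measurableSet_Ioi]
    rfl
  rw [Set.ofPred_exists]
  refine (measure_iUnion_fintype_le _ _).trans ?_
  simp only [h]
  rw [ENNReal.ofReal_mul (by positivity), ofReal_measureReal]
  simp

lemma exists_prob_forall_le_le [IsProbabilityMeasure (ℙ : Measure Ω)]
    (hmeas : ∀ i, Measurable (X i)) (hG : IsJointGaussian X)
    (hmarg : ∀ i, Measure.map (X i) ℙ = gaussianReal 0 1) {τ : ℝ} (hτ : 0 < τ) (hτ1 : τ < 1)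
    {N : ℕ} (hN : ∀ i, Nat.card {k | τ < covar (X k) (X i)} ≤ N) {a η t b : ℝ} (hη : 0 < η)
    (ht : 0 < t) (hb : 0 ≤ b) (hab : a + η + t ≤ b * √(1 - τ)) :
    ∃ q : ℕ, Fintype.card κ ≤ q * N ∧ ℙ {ω | ∀ i, X i ω ≤ a} ≤
      2 * (ENNReal.ofReal (τ / t ^ 2) +
        ENNReal.ofReal (Real.exp (-(q * (gaussianReal 0 1).real (Set.Ioi b))))) := by
  classical
  obtain ⟨I, hI, hcard⟩ := exists_finset_pairwise_of_card_le
    (fun k i => τ < covar (X k) (X i))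
    (fun i => by simpa only [covar_self_eq_one (hmeas i) (hmarg i)] using hτ1)
    (fun i j h => by rwa [covar_comm]) N hN
  refine ⟨I.card, hcard, ?_⟩
  have hmap := (hG.comp (fun i : I => (i : κ))).map_eq_multivariateGaussian
    (fun i => hmeas i) (fun i => hmarg i)
  have hS := posSemidef_covar fun i : I => memLp_two_of_map_eq_gaussianReal (hmeas i) (hmarg i)
  have hbound := lowerOrthant_le_of_covariance_le hS
    (fun i => by simpa using covar_self_eq_one (hmeas i) (hmarg i)) hτ.le hτ1
    (fun i j hij => not_lt.1 (hI i i.2 j j.2 (fun h => hij (Subtype.ext h)))) hη hb hab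
  calc ℙ {ω | ∀ i, X i ω ≤ a}
      ≤ ℙ ((fun ω => WithLp.toLp 2 fun i : I => X i ω) ⁻¹' lowerOrthant fun _ => a) :=
        measure_mono fun ω hω i => hω i
    _ = multivariateGaussian 0 (Matrix.of fun i j : I => covar (X i) (X j))
          (lowerOrthant fun _ => a) := by
        rw [← hmap, Measure.map_apply (by fun_prop) (measurableSet_lowerOrthant _)]
    _ ≤ _ := hbound
    _ ≤ _ := by
        rw [Fintype.card_coe]
        gcongr
        · exact gaussianReal_sqrt_mul_le_neg hτ ht
        · exact gaussianReal_Iic_pow_le _ _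

end Maximum

/-- Non-asymptotic concentration bound for the maximum of `p` standard Gaussian variables, at most
`N` of which have covariance larger than `τ` with any given one. -/
lemma prob_abs_max_div_quantile_sub_one_le
    {Ω : Type*} [MeasureSpace Ω] [IsProbabilityMeasure (ℙ : Measure Ω)]
    {p : ℕ} (hp : 2 ≤ p) {X : Fin p → Ω → ℝ} (hmeas : ∀ i, Measurable (X i))
    (hG : IsJointGaussian X) (hmarg : ∀ i, Measure.map (X i) ℙ = gaussianReal 0 1)
    {τ : ℝ} (hτ : 0 < τ) {N : ℕ} (hN : ∀ i, Nat.card {k | τ < covar (X k) (X i)} ≤ N)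
    {u : ℝ} (hu : 0 < u) (hpu : (gaussianReal 0 1).real (Set.Ioi u) = 1 / p)
    {δ : ℝ} (hδ : 0 < δ) (hδ1 : δ ≤ 1 / 2) (hτδ : τ ≤ δ / 8) :
    ℙ {ω | δ < |(⨆ i, X i ω) / u - 1|} ≤
      ENNReal.ofReal (Real.exp (-(δ * u ^ 2))) +
      2 * (ENNReal.ofReal (64 * τ / (δ ^ 2 * u ^ 2)) +
        ENNReal.ofReal (Real.exp (-Real.exp (δ * u ^ 2 / 4 - Real.log N)))) := by
  have hp0 : (0 : ℝ) < p := by positivity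
  have : Nonempty (Fin p) := ⟨⟨0, by omega⟩⟩
  have hsub : {ω | δ < |(⨆ i, X i ω) / u - 1|} ⊆
      {ω | ∃ i, u + δ * u < X i ω} ∪ {ω | ∀ i, X i ω ≤ (1 - δ) * u} := by
    intro ω hω
    rcases lt_abs.1 (show δ < |(⨆ i, X i ω) / u - 1| from hω) with h | h
    · left
      by_contra hne
      simp only [Set.mem_ofPred_eq, not_exists, not_lt] at hne
      have h1 := ciSup_le hne
      have h2 : 1 + δ < (⨆ i, X i ω) / u := by linarith
      rw [lt_div_iff₀ hu] at h2
      linarith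
    · right
      intro i
      have h1 : (⨆ i, X i ω) / u < 1 - δ := by linarith
      rw [div_lt_iff₀ hu] at h1
      exact (le_ciSup (Set.finite_range _).bddAbove i).trans h1.le
  refine (measure_mono hsub).trans ((measure_union_le _ _).trans (add_le_add ?_ ?_))
  · refine (prob_exists_gt_le hmeas hmarg _).trans (ENNReal.ofReal_le_ofReal ?_)
    have := gaussianReal_Ioi_add_le (u := u) (h := δ * u) (by positivity)
    rw [hpu] at this
    rw [Fintype.card_fin]
    calc p * (gaussianReal 0 1).real (Set.Ioi (u + δ * u))
        ≤ p * (Real.exp (-(u * (δ * u))) * (1 / p)) := by gcongr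
      _ = Real.exp (-(u * (δ * u))) := by field_simp
      _ = _ := by ring_nf
  · have hsqrt : 1 - δ / 8 ≤ √(1 - τ) := by
      refine Real.le_sqrt_of_sq_le ?_
      nlinarith
    have hab : (1 - δ) * u + δ * u / 8 + δ * u / 8 ≤ (u - δ * u / 2) * √(1 - τ) := by
      have h1 : 0 ≤ u - δ * u / 2 := by nlinarith
      nlinarith [mul_le_mul_of_nonneg_left hsqrt h1, mul_pos hδ hu,
        mul_nonneg (mul_pos hδ hu).le hδ.le]
    obtain ⟨q, hq, h⟩ := exists_prob_forall_le_le hmeas hG hmarg hτ (by linarith) hN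
      (show 0 < δ * u / 8 by positivity) (show 0 < δ * u / 8 by positivity)
      (show 0 ≤ u - δ * u / 2 by nlinarith) hab
    refine h.trans ?_
    rw [Fintype.card_fin] at hq
    have hN0 : (0 : ℝ) < N := by
      have : N ≠ 0 := by rintro rfl; omega
      positivity
    gcongr 2 * (ENNReal.ofReal ?_ + ENNReal.ofReal (Real.exp (-?_)))
    · exact le_of_eq (by field_simp; norm_num)
    · have hq' : (p : ℝ) ≤ q * N := by exact_mod_cast hq
      have h1 := le_gaussianReal_Ioi_sub (u := u) (h := δ * u / 2) (by positivity)
      rw [hpu] at h1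
      rw [Real.exp_sub, Real.exp_log hN0, div_le_iff₀ hN0]
      calc Real.exp (δ * u ^ 2 / 4)
          ≤ Real.exp (u * (δ * u / 2) - (δ * u / 2) ^ 2 / 2) := by
            gcongr
            nlinarith [mul_pos hδ (pow_pos hu 2)]
        _ = p * (Real.exp (u * (δ * u / 2) - (δ * u / 2) ^ 2 / 2) * (1 / p)) := by field_simp
        _ ≤ (q * N) * (gaussianReal 0 1).real (Set.Ioi (u - δ * u / 2)) := by gcongr
        _ = _ := by ring

/-- Replacing `δ` by `min δ (1 / 2)` preserves the rate condition. -/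
lemma tendsto_div_min_half {r δ : ℕ → ℝ} (hr : Tendsto r atTop (𝓝 0)) (hr0 : ∀ᶠ p in atTop, 0 ≤ r p)
    (hδ : ∀ p, 0 < δ p) (h : Tendsto (fun p => r p / δ p) atTop (𝓝 0)) :
    Tendsto (fun p => r p / min (δ p) (1 / 2)) atTop (𝓝 0) := by
  have hsum : Tendsto (fun p => r p / δ p + 2 * r p) atTop (𝓝 0) := by
    simpa using h.add (hr.const_mul 2)
  refine squeeze_zero' ?_ ?_ hsum
  · filter_upwards [hr0] with p hp
    have := hδ p
    positivity
  · filter_upwards [hr0] with p hp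
    have := hδ p
    rcases min_cases (δ p) (1 / 2) with ⟨h1, -⟩ | ⟨h1, -⟩ <;> rw [h1]
    · linarith
    · have : 0 ≤ r p / δ p := by positivity
      linarith

/-- Rate of concentration of maxima for UDD Gaussian triangular arrays: if
`N_ℰ(τ)` is the UDD packing function, `τ(p) → 0` with
`α(p) = log N_ℰ(τ(p)) / log p → 0`, then for every positive sequence `δ_p` with
`(α(p) + τ(p) + 1/log p)/δ_p → 0` we have
`P(|max_{i∈[p]} ε_p(i)/u_p - 1| > δ_p) → 0`, where `u_p = Φ^{←}(1 - 1/p)`. -/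
theorem rate_of_concentration_UDD
    {Ω : Type*} [MeasureSpace Ω] [IsProbabilityMeasure (ℙ : Measure Ω)]
    (ε : (p : ℕ) → Fin p → Ω → ℝ)
    (hmeas : ∀ p i, Measurable (ε p i))
    (hGauss : ∀ p, IsJointGaussian (ε p))
    (hmarg : ∀ p i, Measure.map (ε p i) ℙ = gaussianReal 0 1)
    (N : ℝ → ℕ)
    (hUDD : ∀ τ : ℝ, 0 < τ → ∀ p : ℕ, ∀ i : Fin p,
      Nat.card {k : Fin p | τ < covar (ε p k) (ε p i)} ≤ N τ)
    (τ : ℕ → ℝ) (hτ_pos : ∀ p, 0 < τ p) (hτ0 : Tendsto τ atTop (𝓝 0))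
    (hα : Tendsto (fun p : ℕ => Real.log (N (τ p)) / Real.log p) atTop (𝓝 0))
    (δ : ℕ → ℝ) (hδ_pos : ∀ p, 0 < δ p)
    (hrate : Tendsto (fun p : ℕ =>
        (Real.log (N (τ p)) / Real.log p + τ p + 1 / Real.log p) / δ p)
      atTop (𝓝 0)) :
    Tendsto (fun p : ℕ =>
        ℙ {ω | δ p <
            |(⨆ i : Fin p, ε p i ω) / stdGaussianQuantile (1 - 1 / p) - 1|})
      atTop (𝓝 0) := by
  set δ' : ℕ → ℝ := fun p => min (δ p) (1 / 2) with hδ'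
  have hδ'_pos (p : ℕ) : 0 < δ' p := lt_min (hδ_pos p) (by norm_num)
  have hlog : Tendsto (fun p : ℕ => Real.log p) atTop atTop :=
    Real.tendsto_log_atTop.comp tendsto_natCast_atTop_atTop
  set r : ℕ → ℝ := fun p => Real.log (N (τ p)) / Real.log p + τ p + 1 / Real.log p with hr
  have hr_lim : Tendsto r atTop (𝓝 0) := by
    simpa using (hα.add hτ0).add (tendsto_const_nhds.div_atTop hlog)
  have hr0 : ∀ᶠ p in atTop, 0 ≤ r p := by
    filter_upwards [hlog.eventually_gt_atTop 0] with p hp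
    have := hτ_pos p
    have := Real.log_natCast_nonneg (N (τ p))
    positivity
  have hR : Tendsto (fun p => r p / δ' p) atTop (𝓝 0) :=
    tendsto_div_min_half hr_lim hr0 hδ_pos hrate
  -- `x p` is the divergent exponent governing all error terms.
  set x : ℕ → ℝ := fun p => δ' p * Real.log p with hx
  have hbounds : ∀ᶠ p in atTop, 0 < x p ∧ τ p / δ' p ≤ r p / δ' p ∧ 1 / x p ≤ r p / δ' p ∧
      Real.log (N (τ p)) ≤ r p / δ' p * x p := by
    filter_upwards [hlog.eventually_gt_atTop 0] with p hp
    have h1 := hτ_pos p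
    have h2 := Real.log_natCast_nonneg (N (τ p))
    have h3 := hδ'_pos p
    have h4 : 0 ≤ Real.log (N (τ p)) / Real.log p := by positivity
    have h5 : 0 < 1 / Real.log p := by positivity
    refine ⟨by positivity, ?_, ?_, ?_⟩
    · gcongr
      simp only [hr]; linarith
    · rw [hx]
      simp only
      rw [mul_comm, ← div_div]
      gcongr
      simp only [hr]; linarith
    · calc Real.log (N (τ p)) = Real.log (N (τ p)) / Real.log p * Real.log p := by field_simp
        _ ≤ r p * Real.log p := by gcongr; simp only [hr]; linarith
        _ = _ := by simp only [hx]; field_simp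
  have hx_inv : Tendsto (fun p => (x p)⁻¹) atTop (𝓝 0) := by
    refine squeeze_zero' ?_ ?_ hR
    · filter_upwards [hbounds] with p hp
      exact (inv_pos.2 hp.1).le
    · filter_upwards [hbounds] with p hp
      rw [← one_div]
      exact hp.2.2.1
  have hx_top : Tendsto x atTop atTop := by
    have : Tendsto (fun p => (x p)⁻¹) atTop (𝓝[>] 0) :=
      tendsto_nhdsWithin_iff.2 ⟨hx_inv, by filter_upwards [hbounds] with p hp using inv_pos.2 hp.1⟩
    exact this.inv_tendsto_nhdsGT_zero.congr fun p => by simp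
  have hexp {c : ℝ} (hc : 0 < c) : Tendsto (fun p => Real.exp (c * x p)) atTop atTop :=
    Real.tendsto_exp_atTop.comp (hx_top.const_mul_atTop hc)
  have hlim : Tendsto (fun p => ENNReal.ofReal (Real.exp (-(1 / 2 * x p))) +
      2 * (ENNReal.ofReal (128 * (r p / δ' p) * (x p)⁻¹) +
        ENNReal.ofReal (Real.exp (-Real.exp (1 / 16 * x p))))) atTop (𝓝 0) := by
    have h1 : Tendsto (fun p => Real.exp (-(1 / 2 * x p))) atTop (𝓝 0) :=
      Real.tendsto_exp_neg_atTop_nhds_zero.comp (hx_top.const_mul_atTop (by norm_num))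
    have h2 : Tendsto (fun p => 128 * (r p / δ' p) * (x p)⁻¹) atTop (𝓝 0) := by
      simpa using (hR.const_mul 128).mul hx_inv
    have h3 : Tendsto (fun p => Real.exp (-Real.exp (1 / 16 * x p))) atTop (𝓝 0) :=
      Real.tendsto_exp_neg_atTop_nhds_zero.comp (hexp (by norm_num))
    have h := (ENNReal.tendsto_ofReal h1).add (ENNReal.Tendsto.const_mul (a := 2)
      ((ENNReal.tendsto_ofReal h2).add (ENNReal.tendsto_ofReal h3)) (Or.inr (by norm_num)))
    simpa using h
  refine tendsto_of_tendsto_of_tendsto_of_le_of_le' tendsto_const_nhds hlim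
    (Eventually.of_forall fun _ => zero_le) ?_
  filter_upwards [hbounds, eventually_quantile_pos, eventually_log_le_quantile_sq,
    eventually_ge_atTop 2, hR.eventually_le_const (show (0 : ℝ) < 1 / 16 by norm_num)]
    with p hb hu hulog hp hR16
  obtain ⟨hxp, hτr, -, hNr⟩ := hb
  have hd := hδ'_pos p
  change r p / δ' p ≤ 1 / 16 at hR16
  have hτδ : τ p ≤ δ' p / 8 := by
    have := hτr.trans hR16
    rw [div_le_iff₀ hd] at this
    linarith
  have hxu : x p / 2 ≤ δ' p * stdGaussianQuantile (1 - 1 / p) ^ 2 := by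
    simp only [hx]
    nlinarith [mul_le_mul_of_nonneg_left hulog hd.le]
  have hNx : Real.log (N (τ p)) ≤ 1 / 16 * x p := hNr.trans (by gcongr)
  calc ℙ {ω | δ p < |(⨆ i : Fin p, ε p i ω) / stdGaussianQuantile (1 - 1 / p) - 1|}
      ≤ ℙ {ω | δ' p < |(⨆ i : Fin p, ε p i ω) / stdGaussianQuantile (1 - 1 / p) - 1|} :=
        measure_mono fun ω (hω : δ p < _) =>
          show δ' p < _ from (min_le_left _ _).trans_lt hω
    _ ≤ _ := prob_abs_max_div_quantile_sub_one_le hp (hmeas p) (hGauss p) (hmarg p) (hτ_pos p)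
        (hUDD _ (hτ_pos p) p) hu (gaussianReal_Ioi_quantile hp) hd (min_le_right _ _) hτδ
    _ ≤ _ := by
        gcongr ENNReal.ofReal (Real.exp (-?_)) + 2 * (ENNReal.ofReal ?_ +
          ENNReal.ofReal (Real.exp (-Real.exp ?_)))
        · linarith
        · calc 64 * τ p / (δ' p ^ 2 * stdGaussianQuantile (1 - 1 / p) ^ 2)
              = 64 * (τ p / δ' p) / (δ' p * stdGaussianQuantile (1 - 1 / p) ^ 2) := by
                field_simp
            _ ≤ 64 * (r p / δ' p) / (x p / 2) := by
                have := hτ_pos p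
                have : 0 ≤ r p / δ' p := le_trans (by positivity) hτr
                gcongr
            _ = _ := by field_simp; ring
        · linarith
end

section
/- Let ℰ = {ε_p(i), i ∈ [p]} be an arbitrary Gaussian triangular array with standard Normal marginals (arbitrary dependence), set u_p = Φ^{←}(1 − 1/p) and ξ_p := u_p^{−1} max_{i∈[p]} ε_p(i). If δ_p → 0 is a positive sequence with (1/log p)/δ_p → 0, then δ_p^{−1}·E[(ξ_p − 1)_+] → 0 as p → ∞, and consequently P(ξ_p > 1 + δ_p) → 0 as p → ∞. -/
open MeasureTheory ProbabilityTheory Filter Topology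

lemma gaussianPDFReal_zero_one_apply (x : ℝ) :
    gaussianPDFReal 0 1 x = Real.exp (-x ^ 2 / 2) / Real.sqrt (2 * Real.pi) := by
  simp [gaussianPDFReal_def, div_eq_inv_mul]

lemma stdGaussianCDF_eq_cdf (x : ℝ) : stdGaussianCDF x = cdf (gaussianReal 0 1) x := by
  rw [cdf_eq_real, measureReal_def, gaussianReal_apply_eq_integral 0 one_ne_zero,
    ENNReal.toReal_ofReal (integral_nonneg (gaussianPDFReal_nonneg 0 1))]
  simp only [stdGaussianCDF, gaussianPDFReal_zero_one_apply]

lemma stdGaussianCDF_add_integral_Ioi (x : ℝ) :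
    stdGaussianCDF x + ∫ t in Set.Ioi x, gaussianPDFReal 0 1 t = 1 := by
  have h := integrable_gaussianPDFReal 0 1
  rw [← integral_gaussianPDFReal_eq_one 0 one_ne_zero,
    ← intervalIntegral.integral_Iic_add_Ioi h.integrableOn (b := x) h.integrableOn]
  simp only [stdGaussianCDF, gaussianPDFReal_zero_one_apply]

/-- The quantile function attains its level. -/
lemma le_stdGaussianCDF_stdGaussianQuantile {y : ℝ} (hy : y < 1) :
    y ≤ stdGaussianCDF (stdGaussianQuantile y) := by
  have hne : {x : ℝ | y ≤ stdGaussianCDF x}.Nonempty := by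
    obtain ⟨x, hx⟩ := ((tendsto_cdf_atTop (gaussianReal 0 1)).eventually_const_le hy).exists
    exact ⟨x, by rwa [Set.mem_ofPred_eq, stdGaussianCDF_eq_cdf]⟩
  rw [stdGaussianCDF_eq_cdf]
  refine ge_of_tendsto (((cdf (gaussianReal 0 1)).right_continuous _).mono
    Set.Ioi_subset_Ici_self) ?_
  filter_upwards [self_mem_nhdsWithin] with x hx
  obtain ⟨z, hz, hzx⟩ := exists_lt_of_csInf_lt hne hx
  rw [Set.mem_ofPred_eq, stdGaussianCDF_eq_cdf] at hz
  exact hz.trans (monotone_cdf _ hzx.le)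

lemma le_stdGaussianQuantile {y : ℝ} (hy : y < 1) {a : ℝ}
    (ha : ∀ x, y ≤ stdGaussianCDF x → a ≤ x) : a ≤ stdGaussianQuantile y :=
  ha _ (le_stdGaussianCDF_stdGaussianQuantile hy)

lemma gaussianPDFReal_add_one_le_integral_Ioi {x : ℝ} (hx : 0 ≤ x) :
    gaussianPDFReal 0 1 (x + 1) ≤ ∫ t in Set.Ioi x, gaussianPDFReal 0 1 t := by
  have h := integrable_gaussianPDFReal 0 1
  calc gaussianPDFReal 0 1 (x + 1)
      = ∫ _ in Set.Ioc x (x + 1), gaussianPDFReal 0 1 (x + 1) := by simp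
    _ ≤ ∫ t in Set.Ioc x (x + 1), gaussianPDFReal 0 1 t := by
      refine setIntegral_mono_on (by simp) h.integrableOn measurableSet_Ioc fun t ht => ?_
      simp only [gaussianPDFReal_zero_one_apply]
      have h1 := ht.1
      have h2 := ht.2
      gcongr
      linarith
    _ ≤ ∫ t in Set.Ioi x, gaussianPDFReal 0 1 t :=
      setIntegral_mono_set h.integrableOn (ae_of_all _ (gaussianPDFReal_nonneg 0 1))
        (ae_of_all _ Set.Ioc_subset_Ioi_self)

/-- A lower bound on the points where the Gaussian cdf reaches level `1 - 1 / p`. -/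
lemma sqrt_log_sub_one_le_of_le_stdGaussianCDF {p : ℝ} (hp0 : 0 < p) (hp : 4 ≤ Real.log p)
    {x : ℝ} (hx : 1 - 1 / p ≤ stdGaussianCDF x) : Real.sqrt (Real.log p) - 1 ≤ x := by
  by_contra! hlt
  have hL : (1 : ℝ) ≤ Real.sqrt (Real.log p) := Real.one_le_sqrt.mpr (by linarith)
  have hmono : stdGaussianCDF x ≤ stdGaussianCDF (Real.sqrt (Real.log p) - 1) := by
    simp only [stdGaussianCDF_eq_cdf]
    exact monotone_cdf _ hlt.le
  have htail := gaussianPDFReal_add_one_le_integral_Ioi (sub_nonneg.mpr hL)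
  have hsum := stdGaussianCDF_add_integral_Ioi (Real.sqrt (Real.log p) - 1)
  have hexp : 1 / p = Real.exp (-Real.log p) := by
    rw [Real.exp_neg, Real.exp_log hp0, one_div]
  have hpdf : Real.exp (-Real.log p) < gaussianPDFReal 0 1 (Real.sqrt (Real.log p)) := by
    rw [gaussianPDFReal_zero_one_apply, Real.sq_sqrt (by linarith), lt_div_iff₀ (by positivity)]
    have hpi : Real.sqrt (2 * Real.pi) < 3 := by
      rw [Real.sqrt_lt' (by norm_num)]
      linarith [Real.pi_lt_four]
    have h3 : 3 ≤ Real.exp (Real.log p / 2) := by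
      linarith [Real.add_one_le_exp (Real.log p / 2)]
    calc Real.exp (-Real.log p) * Real.sqrt (2 * Real.pi)
        < Real.exp (-Real.log p) * Real.exp (Real.log p / 2) := by
          gcongr
          linarith
      _ = Real.exp (-Real.log p / 2) := by
          rw [← Real.exp_add]
          ring_nf
  rw [sub_add_cancel] at htail
  linarith

lemma integrable_max_sub_gaussianReal (u : ℝ) :
    Integrable (fun x : ℝ => max (x - u) 0) (gaussianReal 0 1) := by
  have hid : Integrable (fun x : ℝ => x) (gaussianReal 0 1) :=
    memLp_one_iff_integrable.mp (memLp_id_gaussianReal' 1 ENNReal.one_ne_top)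
  exact (hid.sub (integrable_const u)).pos_part

/-- The mean excess of a standard Gaussian over a level `u > 0` is at most the tail mass
divided by `u`. -/
lemma integral_max_sub_gaussianReal_le {u : ℝ} (hu : 0 < u) :
    ∫ x, max (x - u) 0 ∂gaussianReal 0 1 ≤ (∫ x in Set.Ioi u, gaussianPDFReal 0 1 x) / u := by
  have h0 := integrable_gaussianPDFReal 0 1
  have hpow (s : ℝ) (hs : -1 < s) :
      Integrable fun x : ℝ => x ^ s * gaussianPDFReal 0 1 x := by
    convert (integrable_rpow_mul_exp_neg_mul_sq (b := 1 / 2) (by norm_num) hs).div_const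
      (Real.sqrt (2 * Real.pi)) using 2 with x
    rw [gaussianPDFReal_zero_one_apply, mul_div_assoc]
    ring_nf
  have h1 : Integrable fun x : ℝ => x * gaussianPDFReal 0 1 x := by
    simpa using hpow 1 (by norm_num)
  have h2 : Integrable fun x : ℝ => x ^ 2 * gaussianPDFReal 0 1 x := by
    simpa using hpow 2 (by norm_num)
  have hlim (s : ℝ) : Tendsto (fun x : ℝ => x ^ s * gaussianPDFReal 0 1 x) atTop (𝓝 0) := by
    have h := ((rpow_mul_exp_neg_mul_sq_isLittleO_exp_neg (b := 1 / 2) (by norm_num)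
      s).trans_tendsto (Real.tendsto_exp_atBot.comp
        (tendsto_id.const_mul_atTop_of_neg (by norm_num : -(1 / 2 : ℝ) < 0)))).div_const
          (Real.sqrt (2 * Real.pi))
    rw [zero_div] at h
    refine h.congr fun x => ?_
    rw [gaussianPDFReal_zero_one_apply, mul_div_assoc]
    ring_nf
  have hderiv (x : ℝ) : HasDerivAt (gaussianPDFReal 0 1) (-x * gaussianPDFReal 0 1 x) x := by
    have h := (((hasDerivAt_pow 2 x).neg.div_const 2).exp).div_const (Real.sqrt (2 * Real.pi))
    convert! h using 1
    · ext t
      exact gaussianPDFReal_zero_one_apply t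
    · simp only [gaussianPDFReal_zero_one_apply, Pi.neg_apply]
      push_cast
      ring
  have h_int_parts : Integrable fun x => (x * (x - u) - 1) * gaussianPDFReal 0 1 x :=
    ((h2.sub (h1.const_mul u)).sub h0).congr (ae_of_all _ fun x => by simp; ring)
  have hparts : ∫ x in Set.Ioi u, (x * (x - u) - 1) * gaussianPDFReal 0 1 x = 0 := by
    have h := integral_Ioi_of_hasDerivAt_of_tendsto' (a := u) (m := 0)
      (f := fun x => -((x - u) * gaussianPDFReal 0 1 x))
      (f' := fun x => (x * (x - u) - 1) * gaussianPDFReal 0 1 x)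
      (fun x _ => by
        convert! (((hasDerivAt_id x).sub_const u).mul (hderiv x)).neg using 1
        simp
        ring)
      h_int_parts.integrableOn
      (by
        have h := ((hlim 1).sub ((hlim 0).const_mul u)).neg
        simp only [Real.rpow_one, Real.rpow_zero, mul_zero, sub_zero, neg_zero] at h
        exact h.congr fun x => by ring)
    simpa using h
  have hexcess : ∫ x, max (x - u) 0 ∂gaussianReal 0 1
      = ∫ x in Set.Ioi u, (x - u) * gaussianPDFReal 0 1 x := by
    rw [integral_gaussianReal_eq_integral_smul one_ne_zero,
      ← setIntegral_eq_integral_of_forall_compl_eq_zero (s := Set.Ioi u)]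
    · refine setIntegral_congr_fun measurableSet_Ioi fun x hx => ?_
      have hx' : u < x := hx
      simp only [smul_eq_mul]
      rw [max_eq_left (by linarith), mul_comm]
    · intro x hx
      have hx' : x ≤ u := not_lt.mp hx
      rw [max_eq_right (by linarith), smul_zero]
  have h_int_excess : Integrable fun x => (x - u) * gaussianPDFReal 0 1 x :=
    (h1.sub (h0.const_mul u)).congr (ae_of_all _ fun x => by simp; ring)
  rw [hexcess, le_div_iff₀ hu, mul_comm, ← integral_const_mul,
    ← zero_add (∫ x in Set.Ioi u, gaussianPDFReal 0 1 x)]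
  nth_rewrite 2 [← hparts]
  rw [← integral_add h_int_parts.integrableOn h0.integrableOn]
  refine setIntegral_mono_on (h_int_excess.const_mul u).integrableOn (h_int_parts.add h0).integrableOn
    measurableSet_Ioi fun x hx => ?_
  have hx' : u < x := hx
  have := mul_nonneg (mul_self_nonneg (x - u)) (gaussianPDFReal_nonneg 0 1 x)
  linarith

lemma max_iSup_div_sub_one_le_sum {p : ℕ} {x : Fin p → ℝ} {u : ℝ} (hu : 0 < u) :
    max ((⨆ i, x i) / u - 1) 0 ≤ ∑ i, max (x i - u) 0 / u := by
  have hnn (i : Fin p) : 0 ≤ max (x i - u) 0 / u := by positivity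
  refine max_le ?_ (Finset.sum_nonneg fun i _ => hnn i)
  rcases isEmpty_or_nonempty (Fin p) with h | h
  · simp
  · obtain ⟨i, hi⟩ := exists_eq_ciSup_of_finite (f := x)
    refine le_trans ?_ (Finset.single_le_sum (fun i _ => hnn i) (Finset.mem_univ i))
    rw [← hi, div_sub_one hu.ne']
    gcongr
    exact le_max_left _ _

section Maximum

variable {Ω : Type*} [MeasureSpace Ω] {p : ℕ} {X : Fin p → Ω → ℝ}

lemma integrable_max_sub_of_map_eq {Y : Ω → ℝ} (hY : Measurable Y)
    (hmap : Measure.map Y ℙ = gaussianReal 0 1) (u : ℝ) :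
    Integrable (fun ω => max (Y ω - u) 0) :=
  (hmap ▸ integrable_max_sub_gaussianReal u).comp_measurable hY

lemma integrable_max_iSup_div_sub_one (hX : ∀ i, Measurable (X i))
    (hmap : ∀ i, Measure.map (X i) ℙ = gaussianReal 0 1) {u : ℝ} (hu : 0 < u) :
    Integrable fun ω => max ((⨆ i, X i ω) / u - 1) 0 := by
  refine (integrable_finsetSum Finset.univ fun i _ =>
    (integrable_max_sub_of_map_eq (hX i) (hmap i) u).div_const u).mono'
      ((((Measurable.iSup hX).div_const u).sub_const 1).max
        measurable_const).aestronglyMeasurable (ae_of_all _ fun ω => ?_)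
  rw [Real.norm_of_nonneg (le_max_right _ _)]
  exact max_iSup_div_sub_one_le_sum hu

/-- Bound on the mean relative excess of the maximum of `p` standard Gaussian variables with
arbitrary dependence. -/
lemma integral_max_iSup_div_sub_one_le (hX : ∀ i, Measurable (X i))
    (hmap : ∀ i, Measure.map (X i) ℙ = gaussianReal 0 1) {u : ℝ} (hu : 0 < u) :
    ∫ ω, max ((⨆ i, X i ω) / u - 1) 0
      ≤ p * (∫ x in Set.Ioi u, gaussianPDFReal 0 1 x) / u ^ 2 := by
  have h_int (i : Fin p) : Integrable fun ω => max (X i ω - u) 0 / u :=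
    (integrable_max_sub_of_map_eq (hX i) (hmap i) u).div_const u
  calc ∫ ω, max ((⨆ i, X i ω) / u - 1) 0
      ≤ ∫ ω, ∑ i, max (X i ω - u) 0 / u :=
        integral_mono (integrable_max_iSup_div_sub_one hX hmap hu)
          (integrable_finsetSum _ fun i _ => h_int i) fun _ => max_iSup_div_sub_one_le_sum hu
    _ = ∑ _i : Fin p, (∫ x, max (x - u) 0 ∂gaussianReal 0 1) / u := by
        rw [integral_finsetSum _ fun i _ => h_int i]
        refine Finset.sum_congr rfl fun i _ => ?_
        rw [integral_div, ← hmap i, integral_map (hX i).aemeasurable (by fun_prop)]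
    _ ≤ ∑ _i : Fin p, (∫ x in Set.Ioi u, gaussianPDFReal 0 1 x) / u / u := by
        gcongr
        exact integral_max_sub_gaussianReal_le hu
    _ = p * (∫ x in Set.Ioi u, gaussianPDFReal 0 1 x) / u ^ 2 := by
        simp
        ring

end Maximum

lemma sqrt_log_div_two_le_stdGaussianQuantile {p : ℝ} (hp : 0 < p) (hlog : 4 ≤ Real.log p) :
    Real.sqrt (Real.log p) / 2 ≤ stdGaussianQuantile (1 - 1 / p) := by
  have h2 : (2 : ℝ) ≤ Real.sqrt (Real.log p) := Real.le_sqrt_of_sq_le (by linarith)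
  have := le_stdGaussianQuantile (by simpa using hp)
    fun x => sqrt_log_sub_one_le_of_le_stdGaussianCDF hp hlog (x := x)
  linarith

lemma integral_Ioi_stdGaussianQuantile_le {p : ℝ} (hp : 0 < p) :
    ∫ x in Set.Ioi (stdGaussianQuantile (1 - 1 / p)), gaussianPDFReal 0 1 x ≤ 1 / p := by
  have h := le_stdGaussianCDF_stdGaussianQuantile (y := 1 - 1 / p) (by simpa using hp)
  linarith [stdGaussianCDF_add_integral_Ioi (stdGaussianQuantile (1 - 1 / p))]

/-- For an arbitrary Gaussian triangular array with standard Normal marginals, if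
`δ_p → 0` and `(1/log p)/δ_p → 0`, then `δ_p⁻¹ E[(ξ_p - 1)_+] → 0` and consequently
`P(ξ_p > 1 + δ_p) → 0`, where `ξ_p = u_p⁻¹ max_{i∈[p]} ε_p(i)` and `u_p = Φ^{←}(1 - 1/p)`. -/
theorem upper_tail_rate_arbitrary_dependence
    {Ω : Type*} [MeasureSpace Ω] [IsProbabilityMeasure (ℙ : Measure Ω)]
    (ε : (p : ℕ) → Fin p → Ω → ℝ)
    (hmeas : ∀ p i, Measurable (ε p i))
    (hGauss : ∀ p, IsJointGaussian (ε p))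
    (hmarg : ∀ p i, Measure.map (ε p i) ℙ = gaussianReal 0 1)
    (δ : ℕ → ℝ) (hδ_pos : ∀ p, 0 < δ p) (hδ0 : Tendsto δ atTop (𝓝 0))
    (hrate : Tendsto (fun p : ℕ => (1 / Real.log p) / δ p) atTop (𝓝 0)) :
    Tendsto (fun p : ℕ =>
        (δ p)⁻¹ *
          ∫ ω, max ((⨆ i : Fin p, ε p i ω) / stdGaussianQuantile (1 - 1 / p) - 1) 0 ∂ℙ)
      atTop (𝓝 0) ∧
    Tendsto (fun p : ℕ =>
        ℙ {ω | 1 + δ p < (⨆ i : Fin p, ε p i ω) / stdGaussianQuantile (1 - 1 / p)})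
      atTop (𝓝 0) := by
  have hlarge : ∀ᶠ p : ℕ in atTop, 0 < p ∧ 4 ≤ Real.log p :=
    (eventually_gt_atTop 0).and
      ((Real.tendsto_log_atTop.comp tendsto_natCast_atTop_atTop).eventually_ge_atTop 4)
  have hpos {p : ℕ} (hp : 0 < p) (hlog : 4 ≤ Real.log p) :
      0 < stdGaussianQuantile (1 - 1 / p) := by
    have : 0 < Real.log p := by linarith
    exact lt_of_lt_of_le (by positivity)
      (sqrt_log_div_two_le_stdGaussianQuantile (Nat.cast_pos.mpr hp) hlog)
  have hmean : Tendsto (fun p : ℕ => (δ p)⁻¹ *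
      ∫ ω, max ((⨆ i : Fin p, ε p i ω) / stdGaussianQuantile (1 - 1 / p) - 1) 0 ∂ℙ)
      atTop (𝓝 0) := by
    have hbound : Tendsto (fun p : ℕ => 4 * ((1 / Real.log p) / δ p)) atTop (𝓝 0) := by
      simpa using hrate.const_mul 4
    refine squeeze_zero' (Eventually.of_forall fun p => mul_nonneg (inv_nonneg.mpr (hδ_pos p).le)
      (integral_nonneg fun ω => le_max_right _ _)) ?_ hbound
    filter_upwards [hlarge] with p ⟨hp, hlog⟩
    have hp' : (0 : ℝ) < p := Nat.cast_pos.mpr hp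
    have hlog' : 0 < Real.log p := by linarith
    have hu := hpos hp hlog
    have hlow := sqrt_log_div_two_le_stdGaussianQuantile hp' hlog
    have htail := integral_Ioi_stdGaussianQuantile_le hp'
    have h_int := integral_max_iSup_div_sub_one_le (hmeas p) (hmarg p) hu
    set u := stdGaussianQuantile (1 - 1 / p)
    have hsq : Real.log p / 4 ≤ u ^ 2 := by
      have : (Real.sqrt (Real.log p) / 2) ^ 2 ≤ u ^ 2 := by gcongr
      rw [div_pow, Real.sq_sqrt hlog'.le] at this
      linarith
    have hδ := hδ_pos p
    calc (δ p)⁻¹ * ∫ ω, max ((⨆ i : Fin p, ε p i ω) / u - 1) 0 ∂ℙ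
        ≤ (δ p)⁻¹ * (p * (1 / p) / (Real.log p / 4)) := by
          gcongr
          refine h_int.trans ?_
          gcongr
      _ = 4 * ((1 / Real.log p) / δ p) := by
          field_simp
  refine ⟨hmean, ?_⟩
  have hmean' := ENNReal.tendsto_ofReal hmean
  rw [ENNReal.ofReal_zero] at hmean'
  refine tendsto_of_tendsto_of_tendsto_of_le_of_le' tendsto_const_nhds hmean'
    (Eventually.of_forall fun p => zero_le) ?_
  filter_upwards [hlarge] with p ⟨hp, hlog⟩
  have hmarkov := mul_meas_ge_le_integral_of_nonneg (ae_of_all _ fun ω => le_max_right _ _)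
    (integrable_max_iSup_div_sub_one (hmeas p) (hmarg p) (hpos hp hlog)) (δ p)
  refine (measure_mono fun ω hω => ?_).trans (ENNReal.le_ofReal_iff_toReal_le (measure_ne_top _ _)
    (mul_nonneg (inv_nonneg.mpr (hδ_pos p).le) (integral_nonneg fun ω => le_max_right _ _)) |>.mpr
      ((le_inv_mul_iff₀ (hδ_pos p)).mpr hmarkov))
  simp only [Set.mem_ofPred_eq] at hω ⊢
  exact le_max_of_le_left (by linarith)
end

section
/- Let ℰ = {ε_p(i), i ∈ [p], p ∈ ℕ} be a Gaussian triangular array with standard Normal marginals such that for some ν > 0 and constant c > 0 independent of p there exist permutations π_p of {1,…,p} with |Cov(ε_p(i), ε_p(j))| ≤ c·(log |π_p(i) − π_p(j)|)^{−ν} for all distinct i, j ∈ [p] with |π_p(i) − π_p(j)| ≥ 2. Then ℰ is UDD and its UDD function satisfies N_ℰ(τ) = O(e^{(c/τ)^{1/ν}}) as τ → 0, i.e., there exists a constant C such that for all sufficiently small τ > 0 one may take N_ℰ(τ) ≤ C·e^{(c/τ)^{1/ν}}. -/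
open MeasureTheory ProbabilityTheory Filter Topology

/-- Inverting the logarithmic decay: if `τ < c (log d)^{-ν}` and `2 ≤ d`, then
`d < e^{(c/τ)^{1/ν}}`. -/
lemma lt_exp_of_lt_mul_log_rpow_neg {ν c τ d : ℝ} (hν : 0 < ν) (hτ : 0 < τ) (hd : 2 ≤ d)
    (h : τ < c * Real.log d ^ (-ν)) : d < Real.exp ((c / τ) ^ (1 / ν)) := by
  have hlog : 0 < Real.log d := Real.log_pos (by linarith)
  have hpow : 0 < Real.log d ^ ν := Real.rpow_pos_of_pos hlog ν
  rw [Real.rpow_neg hlog.le, ← div_eq_mul_inv, lt_div_iff₀ hpow] at h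
  have hlt : Real.log d ^ ν < c / τ := by
    rw [lt_div_iff₀ hτ]
    linarith
  rw [← Real.log_lt_iff_lt_exp (by linarith), one_div]
  exact (Real.lt_rpow_inv_iff_of_pos hlog.le (hpow.trans hlt).le hν).2 hlt

/-- At most `2 M + 1` indices are mapped by a permutation of `Fin p` to within distance `M` of a
given point. -/
lemma card_le_of_forall_abs_sub_le {p M : ℕ} (σ : Equiv.Perm (Fin p)) (a : ℕ) (s : Set (Fin p))
    (hs : ∀ k ∈ s, |((σ k : ℕ) : ℝ) - (a : ℝ)| ≤ M) : Nat.card s ≤ 2 * M + 1 := by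
  have hinj : Function.Injective fun k : Fin p => (σ k : ℕ) :=
    Fin.val_injective.comp σ.injective
  have hmaps : ∀ k ∈ s, (σ k : ℕ) ∈ (Finset.Icc (a - M) (a + M) : Set ℕ) := by
    intro k hk
    obtain ⟨hl, hu⟩ := abs_le.1 (hs k hk)
    have hl' : a ≤ (σ k : ℕ) + M := by
      have : (a : ℝ) ≤ ((σ k : ℕ) : ℝ) + M := by linarith
      exact_mod_cast this
    have hu' : (σ k : ℕ) ≤ a + M := by
      have : ((σ k : ℕ) : ℝ) ≤ (a : ℝ) + M := by linarith
      exact_mod_cast this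
    rw [Finset.mem_coe, Finset.mem_Icc]
    omega
  have hcard := Set.ncard_le_ncard_of_injOn _ hmaps hinj.injOn (Finset.finite_toSet _)
  rw [Set.ncard_coe_finset, Nat.card_Icc] at hcard
  rw [Nat.card_coe_set_eq]
  omega

/-- A Gaussian array with logarithmic covariance decay `|Cov(ε_p(i), ε_p(j))| ≤
c (log |π_p(i) - π_p(j)|)^{-ν}` (for `|π_p(i) - π_p(j)| ≥ 2`) is UDD, with UDD function
`N_ℰ(τ) = O(e^{(c/τ)^{1/ν}})` as `τ → 0`. -/
theorem UDD_of_logarithmic_covariance_decay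
    {Ω : Type*} [MeasureSpace Ω] [IsProbabilityMeasure (ℙ : Measure Ω)]
    (ε : (p : ℕ) → Fin p → Ω → ℝ)
    (hmeas : ∀ p i, Measurable (ε p i))
    (hGauss : ∀ p, IsJointGaussian (ε p))
    (hmarg : ∀ p i, Measure.map (ε p i) ℙ = gaussianReal 0 1)
    (ν c : ℝ) (hν : 0 < ν) (hc : 0 < c)
    (π : (p : ℕ) → Equiv.Perm (Fin p))
    (hcov : ∀ p : ℕ, ∀ i j : Fin p, i ≠ j →
      2 ≤ |((π p i : ℕ) : ℝ) - ((π p j : ℕ) : ℝ)| →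
      |covar (ε p i) (ε p j)| ≤
        c * (Real.log |((π p i : ℕ) : ℝ) - ((π p j : ℕ) : ℝ)|) ^ (-ν)) :
    (∀ τ : ℝ, 0 < τ → ∃ N : ℕ, ∀ p : ℕ, ∀ i : Fin p,
        Nat.card {k : Fin p | τ < covar (ε p k) (ε p i)} ≤ N) ∧
      ∃ C : ℝ, ∃ τ₀ : ℝ, 0 < τ₀ ∧
        ∀ τ : ℝ, 0 < τ → τ ≤ τ₀ → ∀ p : ℕ, ∀ i : Fin p,
          (Nat.card {k : Fin p | τ < covar (ε p k) (ε p i)} : ℝ) ≤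
            C * Real.exp ((c / τ) ^ (1 / ν)) := by
  have key : ∀ τ : ℝ, 0 < τ → ∀ p : ℕ, ∀ i : Fin p,
      Nat.card {k : Fin p | τ < covar (ε p k) (ε p i)} ≤
        2 * ⌊2 * Real.exp ((c / τ) ^ (1 / ν))⌋₊ + 1 := by
    intro τ hτ p i
    refine card_le_of_forall_abs_sub_le (π p) (π p i) _ fun k hk => ?_
    have hE : 1 ≤ Real.exp ((c / τ) ^ (1 / ν)) := Real.one_le_exp (by positivity)
    have hdist : |((π p k : ℕ) : ℝ) - ((π p i : ℕ) : ℝ)| ≤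
        2 * Real.exp ((c / τ) ^ (1 / ν)) := by
      rcases lt_or_ge |((π p k : ℕ) : ℝ) - ((π p i : ℕ) : ℝ)| 2 with h | h
      · linarith
      · have hne : k ≠ i := by
          rintro rfl
          norm_num at h
        have := lt_exp_of_lt_mul_log_rpow_neg hν hτ h
          (hk.trans_le ((le_abs_self _).trans (hcov p k i hne h)))
        linarith
    have hnat : |((π p k : ℕ) : ℝ) - ((π p i : ℕ) : ℝ)| =
        ((((π p k : ℕ) : ℤ) - ((π p i : ℕ) : ℤ)).natAbs : ℝ) := by
      rw [Nat.cast_natAbs]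
      push_cast
      rfl
    rw [hnat] at hdist ⊢
    exact_mod_cast Nat.le_floor hdist
  refine ⟨fun τ hτ => ⟨_, key τ hτ⟩, 5, 1, one_pos, fun τ hτ _ p i => ?_⟩
  have hE : 1 ≤ Real.exp ((c / τ) ^ (1 / ν)) := Real.one_le_exp (by positivity)
  have hfloor := Nat.floor_le (a := 2 * Real.exp ((c / τ) ^ (1 / ν))) (by positivity)
  have hcard : (Nat.card {k : Fin p | τ < covar (ε p k) (ε p i)} : ℝ) ≤
      2 * (⌊2 * Real.exp ((c / τ) ^ (1 / ν))⌋₊ : ℝ) + 1 := by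
    exact_mod_cast key τ hτ p i
  linarith
end
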